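/- Let R be a semiartinian von Neumann regular ring with primitive factors artinian. Then the class of all weakly R-projective right R-modules is closed under submodules: every submodule of a weakly R-projective module is weakly R-projective. -/

import Mathlib

universe u

open Submodule Function

/-- The socle of a module: the supremum of all simple submodules. -/
def moduleSocle (R : Type*) (M : Type*) [Ring R] [AddCommGroup M] [Module R M] :
    Submodule R M :=
  sSup {W : Submodule R M | IsSimpleModule R ↥W}

/-- A ring is right semiartinian if every nonzero quotient of the right module `R_R`
has a nonzero socle. -/
def IsRightSemiartinian (R : Type u) [Ring R] : Prop :=
  ∀ I : Submodule Rᵐᵒᵖ R, I ≠ ⊤ → moduleSocle Rᵐᵒᵖ (R ⧸ I) ≠ ⊥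

/-- The right socle sequence of a ring: `S_0 = 0`, `S_{α+1}/S_α = Soc(R/S_α)`,
and unions at limits. -/
noncomputable def socleSeq (R : Type u) [Ring R] : Ordinal.{u} → Submodule Rᵐᵒᵖ R :=
  fun o => Ordinal.limitRecOn o ⊥
    (fun _ S => Submodule.comap S.mkQ (moduleSocle Rᵐᵒᵖ (R ⧸ S)))
    (fun o _ ih => ⨆ (β : Ordinal.{u}) (h : β < o), ih β h)

/-- `S_α`, viewed as a submodule of `S_{α+1}`; the kernel of the `α`-th layer
epimorphism `π_α : S_{α+1} → S_{α+1}/S_α`. -/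
noncomputable def layerKer (R : Type u) [Ring R] (α : Ordinal.{u}) :
    Submodule Rᵐᵒᵖ ↥(socleSeq R (α + 1)) :=
  (socleSeq R α).comap (socleSeq R (α + 1)).subtype

/-- The `α`-th layer `L_α = S_{α+1}/S_α` of a ring. -/
noncomputable abbrev Layer (R : Type u) [Ring R] (α : Ordinal.{u}) :=
  ↥(socleSeq R (α + 1)) ⧸ layerKer R α

/-- A module `M` is weakly `R`-projective if for each `0 < α ≤ σ`, every homomorphism
`f : M → L_α` with finitely generated image factors through the `α`-th layer
epimorphism `π_α : S_{α+1} → L_α`. -/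
def WeaklyRProjective (R : Type u) [Ring R] (σ : Ordinal.{u})
    (M : Type u) [AddCommGroup M] [Module Rᵐᵒᵖ M] : Prop :=
  ∀ α : Ordinal.{u}, 0 < α → α ≤ σ →
    ∀ f : M →ₗ[Rᵐᵒᵖ] Layer R α, (LinearMap.range f).FG →
      ∃ g : M →ₗ[Rᵐᵒᵖ] ↥(socleSeq R (α + 1)), (layerKer R α).mkQ ∘ₗ g = f

/-- A ring is von Neumann regular if each `r` admits `s` with `r * s * r = r`. -/
def IsVNRegular (R : Type u) [Ring R] : Prop :=
  ∀ r : R, ∃ s : R, r * s * r = r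

/-- The annihilator of a right `R`-module, as a submodule of the right module `R_R`. -/
def rightAnnihilator (R : Type u) [Ring R] (M : Type u) [AddCommGroup M]
    [Module Rᵐᵒᵖ M] : Submodule Rᵐᵒᵖ R where
  carrier := {r : R | ∀ m : M, MulOpposite.op r • m = 0}
  add_mem' := by
    intro a b ha hb m
    rw [MulOpposite.op_add, add_smul, ha m, hb m, add_zero]
  zero_mem' := by
    intro m
    rw [MulOpposite.op_zero, zero_smul]
  smul_mem' := by
    intro c r hr m
    have h : MulOpposite.op (c • r) = c * MulOpposite.op r := by
      rw [MulOpposite.smul_eq_mul_unop, MulOpposite.op_mul, MulOpposite.op_unop]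
    rw [h, mul_smul, hr m, smul_zero]

/-- A ring has (right) primitive factors artinian if, for each right primitive
(two-sided) ideal `P`, i.e. the annihilator of a simple right module, the factor
`R/P` is (right) artinian. -/
def HasPFA (R : Type u) [Ring R] : Prop :=
  ∀ (M : Type u) [AddCommGroup M] [Module Rᵐᵒᵖ M], IsSimpleModule Rᵐᵒᵖ M →
    IsArtinian Rᵐᵒᵖ (R ⧸ rightAnnihilator R M)

/-- Over a regular ring a simple module with artinian primitive factor satisfies Baer's criterion. -/
theorem baer_of_simple {A : Type*} [Ring A] (hreg : ∀ a : A, ∃ b, a * b * a = a)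
    (S : Type*) [AddCommGroup S] [Module A S] [IsSimpleModule A S]
    [IsArtinian A (A ⧸ Module.annihilator A S)] : Module.Baer A S := by
  have hss : IsSemisimpleModule A (A ⧸ Module.annihilator A S) := by
    rw [IsArtinian.isSemisimpleModule_iff_jacobson, eq_bot_iff]
    intro x hx
    obtain ⟨a, rfl⟩ := Submodule.mkQ_surjective _ x
    rw [Submodule.mem_bot, Submodule.mkQ_apply, Submodule.Quotient.mk_eq_zero,
      Module.mem_annihilator]
    intro s
    have h := Module.le_comap_jacobson ((Module.annihilator A S).liftQ
      (LinearMap.toSpanSingleton A S s) (by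
        intro y hy
        simpa using Module.mem_annihilator.1 hy s)) hx
    rw [IsSimpleModule.jacobson_eq_bot] at h
    exact h
  intro I g
  let i : (I ⧸ Submodule.comap I.subtype (Module.annihilator A S)) →ₗ[A] A ⧸ Module.annihilator A S :=
    Submodule.mapQ _ _ I.subtype le_rfl
  have hi : Function.Injective i := by
    rw [← LinearMap.ker_eq_bot]
    exact Submodule.ker_liftQ_eq_bot _ _ _ (by rw [LinearMap.ker_comp, Submodule.ker_mkQ])
  obtain ⟨h, hh⟩ := IsSemisimpleModule.extension_property i hi
    (Submodule.liftQ _ g (by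
      intro x hx
      obtain ⟨b, hb⟩ := hreg x.1
      have h1 : x = (x.1 * b) • x := Subtype.ext (by simp [hb])
      rw [LinearMap.mem_ker, h1, map_smul, mul_smul]
      exact Module.mem_annihilator.1 (show x.1 ∈ Module.annihilator A S from hx) _))
  refine ⟨h ∘ₗ Submodule.mkQ _, fun x hx => ?_⟩
  have := LinearMap.congr_fun hh (Submodule.Quotient.mk ⟨x, hx⟩)
  simpa [i] using this

theorem baer_pi {A : Type*} [Ring A] {ι : Type*} (S : ι → Type*) [∀ i, AddCommGroup (S i)]
    [∀ i, Module A (S i)] (h : ∀ i, Module.Baer A (S i)) : Module.Baer A (∀ i, S i) := by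
  intro I g
  choose g' hg' using fun i => h i I (LinearMap.proj i ∘ₗ g)
  exact ⟨LinearMap.pi g', fun x hx => funext fun i => by simp [hg' i x hx]⟩

theorem isArtinian_op {R : Type u} [Ring R] (hpfa : HasPFA R) (S : Type u) [AddCommGroup S]
    [Module Rᵐᵒᵖ S] [hS : IsSimpleModule Rᵐᵒᵖ S] :
    IsArtinian Rᵐᵒᵖ (Rᵐᵒᵖ ⧸ Module.annihilator Rᵐᵒᵖ S) := by
  have := hpfa S hS
  let e : R →ₗ[Rᵐᵒᵖ] Rᵐᵒᵖ :=
    { toFun := MulOpposite.op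
      map_add' := fun _ _ => rfl
      map_smul' := fun _ _ => rfl }
  refine isArtinian_of_surjective (R ⧸ rightAnnihilator R S)
    (Submodule.mapQ _ _ e fun r hr => Module.mem_annihilator.2 hr) ?_
  intro x
  obtain ⟨a, rfl⟩ := Submodule.mkQ_surjective _ x
  exact ⟨Submodule.Quotient.mk a.unop, rfl⟩

theorem socleSeq_succ' (R : Type u) [Ring R] (α : Ordinal.{u}) : socleSeq R (α + 1) =
    Submodule.comap (socleSeq R α).mkQ (moduleSocle Rᵐᵒᵖ (R ⧸ socleSeq R α)) := by
  rw [socleSeq, Ordinal.limitRecOn_add_one]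
  rfl

theorem moduleSocle_semisimple (A M : Type*) [Ring A] [AddCommGroup M] [Module A M] :
    IsSemisimpleModule A (moduleSocle A M) := by
  rw [moduleSocle, sSup_eq_iSup]
  refine isSemisimpleModule_biSup_of_isSemisimpleModule_submodule fun W hW => ?_
  have : IsSimpleModule A W := hW
  infer_instance

theorem layer_semisimple (R : Type u) [Ring R] (α : Ordinal.{u}) :
    IsSemisimpleModule Rᵐᵒᵖ (Layer R α) := by
  have := moduleSocle_semisimple Rᵐᵒᵖ (R ⧸ socleSeq R α)
  let i : Layer R α →ₗ[Rᵐᵒᵖ] R ⧸ socleSeq R α :=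
    Submodule.mapQ _ _ (socleSeq R (α + 1)).subtype le_rfl
  have hi : Function.Injective i := by
    rw [← LinearMap.ker_eq_bot]
    exact Submodule.ker_liftQ_eq_bot _ _ _
      (by rw [LinearMap.ker_comp, Submodule.ker_mkQ]; exact le_rfl)
  have hm : ∀ x, i x ∈ moduleSocle Rᵐᵒᵖ (R ⧸ socleSeq R α) := by
    intro x
    obtain ⟨a, rfl⟩ := Submodule.mkQ_surjective _ x
    exact (socleSeq_succ' R α).le a.2
  exact IsSemisimpleModule.of_injective (i.codRestrict _ hm)
    (fun x y h => hi (congrArg Subtype.val h))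

theorem baer_of_fg_semisimple {R : Type u} [Ring R] (hvnr : IsVNRegular R) (hpfa : HasPFA R)
    (X : Type u) [AddCommGroup X] [Module Rᵐᵒᵖ X] [IsSemisimpleModule Rᵐᵒᵖ X]
    [Module.Finite Rᵐᵒᵖ X] : Module.Baer Rᵐᵒᵖ X := by
  obtain ⟨n, S, e, hS⟩ := IsSemisimpleModule.exists_linearEquiv_fin_dfinsupp Rᵐᵒᵖ X
  refine Module.Baer.of_equiv
    (e.trans (DFinsupp.linearEquivFunOnFintype (R := Rᵐᵒᵖ) (M := fun i => S i))).symm (baer_pi _ fun i => ?_)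
  have := hS i
  have := isArtinian_op hpfa (S i)
  refine baer_of_simple (fun a => ?_) (S i)
  obtain ⟨s, hs⟩ := hvnr a.unop
  exact ⟨MulOpposite.op s, MulOpposite.unop_injective (by simpa [mul_assoc] using hs)⟩

/-- Lemma 8(1) of the paper: over a semiartinian von Neumann regular
ring with primitive factors artinian, the class of weakly `R`-projective modules is
closed under submodules. -/
theorem weaklyRProjective_submodule (R : Type u) [Ring R]
    (hsa : IsRightSemiartinian R) (hvnr : IsVNRegular R) (hpfa : HasPFA R)
    (σ : Ordinal.{u}) (hσ : IsLeast {o : Ordinal.{u} | socleSeq R o = ⊤} (σ + 1))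
    (M : Type u) [AddCommGroup M] [Module Rᵐᵒᵖ M]
    (hM : WeaklyRProjective R σ M) (N : Submodule Rᵐᵒᵖ M) :
    WeaklyRProjective R σ ↥N := by
  intro α h0 hα f hf
  have := layer_semisimple R α
  have : Module.Finite Rᵐᵒᵖ (LinearMap.range f) := Module.Finite.iff_fg.2 hf
  have hB := baer_of_fg_semisimple hvnr hpfa (LinearMap.range f)
  obtain ⟨h, hh⟩ := hB.extension_property N.subtype N.injective_subtype f.rangeRestrict
  obtain ⟨g, hg⟩ := hM α h0 hα ((LinearMap.range f).subtype ∘ₗ h) (by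
    have : IsNoetherian Rᵐᵒᵖ (LinearMap.range f) := inferInstance
    rw [LinearMap.range_comp]
    exact (IsNoetherian.noetherian (LinearMap.range h)).map _)
  refine ⟨g ∘ₗ N.subtype, ?_⟩
  rw [← LinearMap.comp_assoc, hg, LinearMap.comp_assoc, hh]
  rfl
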